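/- arXiv:1112.6340 — 7 statements merged into one kernel-verified Lean document; each statement's English description precedes it below -/
import Mathlib

section
/- Let A be a Noetherian ℂ-algebra, M a finitely generated left A-module, and T an A-module automorphism of M. Let M⁰ ⊆ M be a ℂ-linear subspace such that T⁻¹(M⁰) ⊆ M⁰ and M = ⋃_{r>0} Tʳ(M⁰). Then the A-submodule of M generated by M⁰ is all of M, i.e. A·M⁰ = M. -/
/-- Let `A` be a Noetherian `ℂ`-algebra, `M` a finitely generated left `A`-module, `T`
an `A`-module automorphism of `M`, and `M⁰ ⊆ M` a `ℂ`-subspace with `T⁻¹(M⁰) ⊆ M⁰` and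
`M = ⋃_{r>0} Tʳ(M⁰)`. Then the `A`-submodule generated by `M⁰` is all of `M`. -/
theorem span_of_exhausting_subspace
    (A : Type*) [Ring A] [Algebra ℂ A] [IsNoetherianRing A]
    (M : Type*) [AddCommGroup M] [Module A M] [Module.Finite A M]
    [Module ℂ M] [IsScalarTower ℂ A M]
    (T : M ≃ₗ[A] M) (M0 : Submodule ℂ M)
    (hinv : ∀ x ∈ M0, T.symm x ∈ M0)
    (hcover : ∀ m : M, ∃ r : ℕ, 0 < r ∧ ∃ x ∈ M0, (T ^ r) x = m) :
    Submodule.span A (M0 : Set M) = ⊤ := by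
  set N := Submodule.span A (M0 : Set M) with hN
  have hS : ∀ x ∈ N, T⁻¹ x ∈ N := by
    intro x hx
    have h : N ≤ N.comap (T.symm : M →ₗ[A] M) := by
      rw [hN, Submodule.span_le]
      intro y hy
      exact Submodule.subset_span (hinv y hy)
    exact h hx
  have hmul : ∀ (f g : M ≃ₗ[A] M) (x : M), (f * g) x = f (g x) := fun _ _ _ => rfl
  let F : ℕ →o Submodule A M :=
    { toFun := fun r => N.comap ((T⁻¹ ^ r : M ≃ₗ[A] M) : M →ₗ[A] M)
      monotone' := by
        apply monotone_nat_of_le_succ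
        intro r x hx
        change (T⁻¹ ^ (r + 1)) x ∈ N
        rw [pow_succ', hmul]
        exact hS _ hx }
  have : IsNoetherian A M := isNoetherian_of_isNoetherianRing_of_finite A M
  obtain ⟨n, hn⟩ := monotone_stabilizes_iff_noetherian.mpr this F
  have key : ∀ m : M, m ∈ F n := by
    intro m
    obtain ⟨r, -, x, hx, rfl⟩ := hcover m
    have h1 : (T ^ r) x ∈ F r := by
      change (T⁻¹ ^ r) ((T ^ r) x) ∈ N
      rw [← hmul, inv_pow, inv_mul_cancel]
      exact Submodule.subset_span hx
    rcases le_total r n with h | h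
    · exact F.monotone h h1
    · rw [hn r h]; exact h1
  rw [eq_top_iff]
  intro m _
  have h2 : (T⁻¹ ^ n) ((T ^ n) m) ∈ N := key _
  rwa [← hmul, inv_pow, inv_mul_cancel] at h2
end

section
/- Let A be a Noetherian ℂ-algebra, M a finitely generated left A-module, T an A-module automorphism of M, and M⁰ ⊆ M a ℂ-subspace with T⁻¹(M⁰) ⊆ M⁰ and M = ⋃_{r>0} Tʳ(M⁰). Let N be a left A-module and a : M⁰ → N a ℂ-linear map which is A-compatible, meaning: for every m ∈ M and every h ∈ A there exists an integer N(m,h) > 0 such that for all n > N(m,h) one has T⁻ⁿm ∈ M⁰, h·(T⁻ⁿm) ∈ M⁰, and h·a(T⁻ⁿm) = a(h·T⁻ⁿm). Then there exists a unique A-module homomorphism ã : M → N such that for every m ∈ M there is n₀ with ã(T⁻ⁿm) = a(T⁻ⁿm) for all n ≥ n₀ (where T⁻ⁿm ∈ M⁰ for such n). -/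
/-- Let `A` be a Noetherian `ℂ`-algebra, `M` a finitely generated left `A`-module, `T` an
`A`-module automorphism of `M`, and `M⁰ ⊆ M` a `ℂ`-subspace with `T⁻¹(M⁰) ⊆ M⁰` and
`M = ⋃_{r>0} Tʳ(M⁰)`. Let `N` be a left `A`-module and `a : M⁰ → N` an `A`-compatible
`ℂ`-linear map. Then there exists a unique `A`-module homomorphism `ã : M → N` such that
for every `m ∈ M` we have `ã(T⁻ⁿ m) = a(T⁻ⁿ m)` for all sufficiently large `n`. -/
theorem exists_unique_extension_of_compatible_map
    (A : Type*) [Ring A] [Algebra ℂ A] [IsNoetherianRing A]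
    (M : Type*) [AddCommGroup M] [Module A M] [Module.Finite A M]
    [Module ℂ M] [IsScalarTower ℂ A M]
    (N : Type*) [AddCommGroup N] [Module A N] [Module ℂ N] [IsScalarTower ℂ A N]
    (T : M ≃ₗ[A] M) (M0 : Submodule ℂ M)
    (hinv : ∀ x ∈ M0, T.symm x ∈ M0)
    (hcover : ∀ m : M, ∃ r : ℕ, 0 < r ∧ ∃ x ∈ M0, (T ^ r) x = m)
    (a : M0 →ₗ[ℂ] N)
    (hcompat : ∀ (m : M) (h : A), ∃ N0 : ℕ, 0 < N0 ∧ ∀ n > N0,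
      ∃ (h1 : (T.symm ^ n) m ∈ M0) (h2 : h • (T.symm ^ n) m ∈ M0),
        h • a ⟨(T.symm ^ n) m, h1⟩ = a ⟨h • (T.symm ^ n) m, h2⟩) :
    ∃! atil : M →ₗ[A] N, ∀ m : M, ∃ n0 : ℕ, ∀ n ≥ n0,
      ∃ hm : (T.symm ^ n) m ∈ M0,
        atil ((T.symm ^ n) m) = a ⟨(T.symm ^ n) m, hm⟩ := by
  classical
  obtain ⟨b, hb⟩ := LinearMap.exists_extend a
  have hb' : ∀ x (hx : x ∈ M0), b x = a ⟨x, hx⟩ := fun x hx => by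
    rw [← hb]; rfl
  have hmem : ∀ m : M, ∀ᶠ n in Filter.atTop, (T.symm ^ n) m ∈ M0 := by
    intro m
    obtain ⟨N0, -, h⟩ := hcompat m 1
    filter_upwards [Filter.eventually_gt_atTop N0] with n hn
    exact (h n hn).1
  have hc : ∀ (m : M) (h : A), ∀ᶠ n in Filter.atTop,
      h • b ((T.symm ^ n) m) = b ((T.symm ^ n) (h • m)) := by
    intro m h
    obtain ⟨N0, -, H⟩ := hcompat m h
    filter_upwards [Filter.eventually_gt_atTop N0] with n hn
    obtain ⟨h1, h2, h3⟩ := H n hn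
    rw [map_smul, hb' _ h1, hb' _ h2, h3]
  obtain ⟨k, g, hg⟩ := Module.Finite.exists_fin (R := A) (M := M)
  let π : (Fin k → A) →ₗ[A] M := Fintype.linearCombination A g
  have hπ : ∀ v, π v = ∑ i, v i • g i := fun v => Fintype.linearCombination_apply A g v
  let φ : ℕ → (Fin k → A) →ₗ[A] N := fun n =>
    Fintype.linearCombination A (fun i => b ((T.symm ^ n) (g i)))
  have hφ : ∀ n v, φ n v = ∑ i, v i • b ((T.symm ^ n) (g i)) :=
    fun n v => Fintype.linearCombination_apply A _ v
  have hsurj : Function.Surjective π := by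
    rw [← LinearMap.range_eq_top, Fintype.range_linearCombination, hg]
  have key : ∀ v, ∀ᶠ n in Filter.atTop, φ n v = b ((T.symm ^ n) (π v)) := by
    intro v
    have : ∀ᶠ n in Filter.atTop, ∀ i, v i • b ((T.symm ^ n) (g i))
        = b ((T.symm ^ n) (v i • g i)) := Filter.eventually_all.2 fun i => hc _ _
    filter_upwards [this] with n hn
    rw [hφ, hπ, map_sum, map_sum]
    exact Finset.sum_congr rfl fun i _ => hn i
  obtain ⟨s, hs⟩ : (LinearMap.ker π).FG := IsNoetherian.noetherian _
  have hker : ∀ᶠ n in Filter.atTop, LinearMap.ker π ≤ LinearMap.ker (φ n) := by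
    have : ∀ᶠ n in Filter.atTop, ∀ v ∈ s, φ n v = b ((T.symm ^ n) (π v)) :=
      (Filter.eventually_all_finset s).2 fun v _ => key v
    filter_upwards [this] with n hn
    rw [← hs, Submodule.span_le]
    intro v hv
    have h0 : π v = 0 := by
      have : v ∈ LinearMap.ker π := hs ▸ Submodule.subset_span hv
      exact this
    have := hn v hv
    rw [h0, map_zero, map_zero] at this
    exact this
  choose c hcπ using fun i => hsurj (T.symm (g i))
  have hstep : ∀ᶠ n in Filter.atTop, ∀ i, φ n (c i) = b ((T.symm ^ (n + 1)) (g i)) := by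
    refine Filter.eventually_all.2 fun i => ?_
    filter_upwards [key (c i)] with n hn
    rw [hn, hcπ, pow_succ]; rfl
  obtain ⟨n1, hn1⟩ := Filter.eventually_atTop.1 (hker.and hstep)
  obtain ⟨f0, hf0⟩ : ∃ f0 : M →ₗ[A] N, ∀ v, f0 (π v) = φ n1 v := by
    let e := π.quotKerEquivOfSurjective hsurj
    refine ⟨((LinearMap.ker π).liftQ (φ n1) (hn1 n1 le_rfl).1) ∘ₗ e.symm.toLinearMap, fun v => ?_⟩
    have : e.symm (π v) = (LinearMap.ker π).mkQ v := by
      rw [LinearEquiv.symm_apply_eq]; rfl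
    simp [this]
  have hTS : ∀ n (m : M), (T ^ n) ((T.symm ^ n) m) = m := by
    intro n m
    have : T ^ n * T.symm ^ n = 1 := by
      change T ^ n * T⁻¹ ^ n = 1
      simp
    exact congrArg (fun e : M ≃ₗ[A] M => e m) this
  have hST : ∀ n (m : M), (T.symm ^ n) ((T ^ n) m) = m := by
    intro n m
    have : T.symm ^ n * T ^ n = 1 := by
      change T⁻¹ ^ n * T ^ n = 1
      simp
    exact congrArg (fun e : M ≃ₗ[A] M => e m) this
  let f : M →ₗ[A] N := f0 ∘ₗ (T ^ n1 : M ≃ₗ[A] M).toLinearMap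
  have hf : ∀ n ≥ n1, ∀ v, f ((T.symm ^ n) (π v)) = φ n v := by
    intro n hn
    induction n, hn using Nat.le_induction with
    | base =>
      intro v
      change f0 ((T ^ n1) ((T.symm ^ n1) (π v))) = _
      rw [hTS, hf0]
    | succ n hn ih =>
      have hi : ∀ i, f ((T.symm ^ (n + 1)) (g i)) = b ((T.symm ^ (n + 1)) (g i)) := by
        intro i
        rw [← (hn1 n hn).2 i, ← ih, hcπ, pow_succ]; rfl
      intro v
      rw [hφ, hπ, map_sum, map_sum]
      refine Finset.sum_congr rfl fun i _ => ?_
      rw [map_smul, map_smul, hi]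
  refine ⟨f, fun m => ?_, fun f' hf' => ?_⟩
  · obtain ⟨v, rfl⟩ := hsurj m
    obtain ⟨n0, h0⟩ := Filter.eventually_atTop.1
      (((hmem (π v)).and (key v)).and (Filter.eventually_ge_atTop n1))
    refine ⟨n0, fun n hn => ?_⟩
    obtain ⟨⟨h1, h2⟩, h3⟩ := h0 n hn
    exact ⟨h1, by rw [hf n h3, h2, hb' _ h1]⟩
  · have h1 : ∀ᶠ n in Filter.atTop, ∀ i, f' ((T.symm ^ n) (g i)) = b ((T.symm ^ n) (g i)) := by
      refine Filter.eventually_all.2 fun i => ?_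
      obtain ⟨n0, h0⟩ := hf' (g i)
      filter_upwards [Filter.eventually_ge_atTop n0] with n hn
      obtain ⟨hm, h⟩ := h0 n hn
      rw [h, hb' _ hm]
    obtain ⟨n, hn, hn'⟩ := (h1.and (Filter.eventually_ge_atTop n1)).exists
    ext m
    obtain ⟨v, hv⟩ := hsurj ((T ^ n) m)
    have hm : m = (T.symm ^ n) (π v) := by rw [hv, hST]
    rw [hm, hf n hn', hφ, hπ, map_sum, map_sum]
    refine Finset.sum_congr rfl fun i _ => ?_
    rw [map_smul, map_smul, hn]
end

section
/- Let F be a nontrivially normed field, t ∈ F with 0 < ‖t‖ < 1, and let E, G be normed vector spaces over F. Let τ : E × G → E × G be a map such that τ(0,s) = (0,s) for every s ∈ G and such that at every point (0,s) the map τ is Fréchet differentiable with derivative equal to the identity operator on E × G. For n ≥ 0 define φₙ : E × G → E × G by φₙ(v,s) = (t⁻ⁿ · (τ(tⁿ·v, s))₁ , (τ(tⁿ·v, s))₂), where (·)₁ and (·)₂ denote the components in E and G. Then for every x ∈ E × G, φₙ(x) → x as n → ∞. -/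
/-- Let `F` be a nontrivially normed field, `t ∈ F` with `0 < ‖t‖ < 1`, and `E`, `G`
normed `F`-vector spaces. Let `τ : E × G → E × G` fix every point `(0,s)` and be Fréchet
differentiable there with derivative the identity. Define
`φₙ(v,s) = (t⁻ⁿ • (τ(tⁿ•v, s))₁, (τ(tⁿ•v, s))₂)`. Then `φₙ(x) → x` for every `x`. -/
theorem pointwise_tendsto_of_fderiv_id
    (F : Type*) [NontriviallyNormedField F]
    (E G : Type*) [NormedAddCommGroup E] [NormedSpace F E]
    [NormedAddCommGroup G] [NormedSpace F G]
    (t : F) (ht0 : 0 < ‖t‖) (ht1 : ‖t‖ < 1)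
    (τ : E × G → E × G)
    (hfix : ∀ s : G, τ (0, s) = (0, s))
    (hderiv : ∀ s : G, HasFDerivAt τ (ContinuousLinearMap.id F (E × G)) (0, s))
    (x : E × G) :
    Filter.Tendsto
      (fun n : ℕ =>
        (((t ^ n)⁻¹ • (τ (t ^ n • x.1, x.2)).1, (τ (t ^ n • x.1, x.2)).2) : E × G))
      Filter.atTop (nhds x) := by
  obtain ⟨v, s⟩ := x
  have hne : t ≠ 0 := norm_pos_iff.mp ht0
  have hpow : Filter.Tendsto (fun n : ℕ => t ^ n) Filter.atTop (nhds 0) :=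
    tendsto_pow_atTop_nhds_zero_of_norm_lt_one ht1
  have hpow' : Filter.Tendsto (fun n : ℕ => t ^ n) Filter.atTop (nhdsWithin 0 {0}ᶜ) :=
    tendsto_nhdsWithin_iff.mpr ⟨hpow, Filter.Eventually.of_forall fun n => pow_ne_zero n hne⟩
  have hc : HasDerivAt (fun u : F => ((u • v, s) : E × G)) (v, 0) 0 := by
    have h1 : HasDerivAt (fun u : F => u • v) v 0 := by
      simpa using (hasDerivAt_id (0 : F)).smul_const v
    exact h1.prodMk (hasDerivAt_const (0 : F) s)
  have hd : HasFDerivAt τ (ContinuousLinearMap.id F (E × G)) ((0 : F) • v, s) := by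
    simpa using hderiv s
  have hcomp : HasDerivAt (fun u : F => τ (u • v, s)) (v, 0) 0 := by
    have h := HasFDerivAt.comp_hasDerivAt (l := τ) (0 : F) hd hc
    exact h
  have hfst : HasDerivAt (fun u : F => (τ (u • v, s)).1) v 0 :=
    (ContinuousLinearMap.fst F E G).hasFDerivAt.comp_hasDerivAt (0 : F) hcomp
  have h1 := (hasDerivAt_iff_tendsto_slope_zero.mp hfst).comp hpow'
  have h2 := ((continuous_snd.tendsto _).comp hcomp.continuousAt.tendsto).comp hpow
  refine Filter.Tendsto.prodMk_nhds ?_ ?_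
  · simpa [Function.comp_def, hfix] using h1
  · simpa [Function.comp_def, hfix] using h2
end

section
/- Let F be a nontrivially normed field, t ∈ F with 0 < ‖t‖ < 1, and let E, G be normed vector spaces over F. Let τ : E × G → E × G be a map such that τ(0,s) = (0,s) for every s ∈ G and such that at every point (0,s) the map τ is strictly Fréchet differentiable with derivative equal to the identity operator on E × G. For n ≥ 0 define φₙ : E × G → E × G by φₙ(v,s) = (t⁻ⁿ · (τ(tⁿ·v, s))₁ , (τ(tⁿ·v, s))₂). Then for every compact subset C ⊆ E × G, the sequence φₙ converges to the identity map uniformly on C. -/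
/-- Let `F` be a nontrivially normed field, `t ∈ F` with `0 < ‖t‖ < 1`, and `E`, `G`
normed `F`-vector spaces. Let `τ : E × G → E × G` fix every point `(0,s)` and be strictly
Fréchet differentiable there with derivative the identity. Define
`φₙ(v,s) = (t⁻ⁿ • (τ(tⁿ•v, s))₁, (τ(tⁿ•v, s))₂)`. Then `φₙ` converges to the identity
uniformly on every compact subset `C ⊆ E × G`. -/
theorem tendstoUniformlyOn_of_strictFDeriv_id
    (F : Type*) [NontriviallyNormedField F]
    (E G : Type*) [NormedAddCommGroup E] [NormedSpace F E]
    [NormedAddCommGroup G] [NormedSpace F G]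
    (t : F) (ht0 : 0 < ‖t‖) (ht1 : ‖t‖ < 1)
    (τ : E × G → E × G)
    (hfix : ∀ s : G, τ (0, s) = (0, s))
    (hderiv : ∀ s : G, HasStrictFDerivAt τ (ContinuousLinearMap.id F (E × G)) (0, s))
    (C : Set (E × G)) (hC : IsCompact C) :
    TendstoUniformlyOn
      (fun (n : ℕ) (x : E × G) =>
        (((t ^ n)⁻¹ • (τ (t ^ n • x.1, x.2)).1, (τ (t ^ n • x.1, x.2)).2) : E × G))
      id Filter.atTop C := by
  rw [← tendstoLocallyUniformlyOn_iff_tendstoUniformlyOn_of_compact hC,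
    tendstoLocallyUniformlyOn_iff_forall_tendsto]
  rintro ⟨v, s⟩ -
  have hle : (Filter.atTop : Filter ℕ) ×ˢ nhdsWithin (v, s) C ≤
      (Filter.atTop : Filter ℕ) ×ˢ nhds (v, s) :=
    Filter.prod_mono le_rfl nhdsWithin_le_nhds
  refine Filter.Tendsto.mono_left ?_ hle
  rw [Metric.uniformity_basis_dist.tendsto_right_iff]
  intro ε hε
  have h1 : Filter.Tendsto (fun p : ℕ × (E × G) => t ^ p.1)
      ((Filter.atTop : Filter ℕ) ×ˢ nhds (v, s)) (nhds 0) :=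
    (tendsto_pow_atTop_nhds_zero_of_norm_lt_one ht1).comp Filter.tendsto_fst
  have h2 : Filter.Tendsto (fun p : ℕ × (E × G) => p.2)
      ((Filter.atTop : Filter ℕ) ×ˢ nhds (v, s)) (nhds (v, s)) := Filter.tendsto_snd
  have h3 : Filter.Tendsto (fun p : ℕ × (E × G) => p.2.1)
      ((Filter.atTop : Filter ℕ) ×ˢ nhds (v, s)) (nhds v) :=
    (continuous_fst.tendsto (v, s)).comp h2
  have h4 : Filter.Tendsto (fun p : ℕ × (E × G) => p.2.2)
      ((Filter.atTop : Filter ℕ) ×ˢ nhds (v, s)) (nhds s) :=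
    (continuous_snd.tendsto (v, s)).comp h2
  have h5 : Filter.Tendsto
      (fun p : ℕ × (E × G) => (((t ^ p.1 • p.2.1, p.2.2), (0, p.2.2)) : (E × G) × (E × G)))
      ((Filter.atTop : Filter ℕ) ×ˢ nhds (v, s)) (nhds ((0, s), (0, s))) := by
    have h6 := h1.smul h3
    rw [zero_smul] at h6
    exact (h6.prodMk_nhds h4).prodMk_nhds (tendsto_const_nhds.prodMk_nhds h4)
  have hv : 0 < ‖v‖ + 1 := by positivity
  have hc : 0 < ε / (2 * (‖v‖ + 1)) := by positivity
  have h7 := h5.eventually ((hderiv s).isLittleO.def hc)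
  have h8 : ∀ᶠ p : ℕ × (E × G) in (Filter.atTop : Filter ℕ) ×ˢ nhds (v, s),
      ‖p.2.1‖ < ‖v‖ + 1 := h3.norm.eventually_lt_const (by linarith)
  filter_upwards [h7, h8] with ⟨n, w, r⟩ h hw
  simp only [hfix, ContinuousLinearMap.id_apply] at h hw ⊢
  generalize hc' : ε / (2 * (‖v‖ + 1)) = c at h hc
  have hcε : c * (‖v‖ + 1) = ε / 2 := by rw [← hc']; field_simp
  have hcw : c * ‖w‖ < ε := by nlinarith
  have htn : 0 < ‖t ^ n‖ := by rw [norm_pow]; positivity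
  have htn1 : ‖t ^ n‖ ≤ 1 := by rw [norm_pow]; exact pow_le_one₀ ht0.le ht1.le
  have htne : t ^ n ≠ 0 := norm_pos_iff.1 htn
  generalize τ (t ^ n • w, r) = z at h ⊢
  obtain ⟨a, b⟩ := z
  generalize t ^ n = u at *
  simp only [Prod.mk_sub_mk, sub_zero, sub_self, Prod.norm_mk, norm_zero, norm_smul] at h
  rw [max_eq_left (by positivity : 0 ≤ ‖u‖ * ‖w‖)] at h
  obtain ⟨ha, hb⟩ := max_le_iff.1 h
  rw [dist_comm, dist_eq_norm]
  simp only [id, Prod.mk_sub_mk, Prod.norm_mk]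
  refine max_lt ?_ ?_
  · have e : u⁻¹ • a - w = u⁻¹ • (a - u • w) := by
      rw [smul_sub, inv_smul_smul₀ htne]
    rw [e, norm_smul, norm_inv]
    refine lt_of_le_of_lt ?_ hcw
    rw [inv_mul_le_iff₀ htn]
    linarith
  · refine lt_of_le_of_lt hb (lt_of_le_of_lt ?_ hcw)
    exact mul_le_mul_of_nonneg_left (mul_le_of_le_one_left (norm_nonneg _) htn1) hc.le
end

section
/- Let F be a field, n ≥ 1 and d ≥ 1 integers, and let L be an additive subgroup of ℚⁿ with ℤⁿ ⊆ L ⊆ (1/d)·ℤⁿ. Set M = L ∩ (ℚ≥0)ⁿ, an additive submonoid of ℚⁿ. Then the monoid algebra F[M] is a finitely generated and flat module over the monoid algebra F[ℕⁿ], via the F-algebra homomorphism F[ℕⁿ] → F[M] induced by the inclusion of monoids ℕⁿ ⊆ M. -/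
theorem aux_free (F : Type*) [Field F] {N P B : Type*} [AddCommMonoid N] [AddCommMonoid P] [Finite B]
    (ι : N →+ P) (g : B → P) (bb : P → B) (vv : P → N)
    (h1 : ∀ x, ι (vv x) + g (bb x) = x) (h2 : ∀ b v, bb (ι v + g b) = b)
    (h3 : ∀ b v, vv (ι v + g b) = v) :
    @Module.Finite (AddMonoidAlgebra F N) (AddMonoidAlgebra F P) _ _
      (AddMonoidAlgebra.mapDomainRingHom F ι).toModule ∧
    @Module.Flat (AddMonoidAlgebra F N) (AddMonoidAlgebra F P) _ _
      (AddMonoidAlgebra.mapDomainRingHom F ι).toModule := by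
  classical
  letI : Module (AddMonoidAlgebra F N) (AddMonoidAlgebra F P) :=
    (AddMonoidAlgebra.mapDomainRingHom F ι).toModule
  have hsm : ∀ (a : AddMonoidAlgebra F N) (x : AddMonoidAlgebra F P),
    a • x = AddMonoidAlgebra.mapDomainRingHom F ι a * x := fun _ _ => rfl
  let φ : (B →₀ AddMonoidAlgebra F N) →ₗ[AddMonoidAlgebra F N] AddMonoidAlgebra F P :=
    Finsupp.linearCombination _ (fun b => AddMonoidAlgebra.single (g b) (1 : F))
  have hφ : ∀ b v (r : F), φ (Finsupp.single b (AddMonoidAlgebra.single v r))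
      = AddMonoidAlgebra.single (ι v + g b) r := by
    intro b v r
    simp [φ, hsm, AddMonoidAlgebra.single_mul_single]
  let ψ : AddMonoidAlgebra F P →+ (B →₀ AddMonoidAlgebra F N) :=
    (Finsupp.liftAddHom (fun p => (Finsupp.singleAddHom (bb p)).comp
      (AddMonoidAlgebra.singleAddHom (vv p)))).comp
        (AddMonoidAlgebra.coeffAddEquiv (R := F) (M := P)).toAddMonoidHom
  have hψ : ∀ p (r : F), ψ (AddMonoidAlgebra.single p r)
      = Finsupp.single (bb p) (AddMonoidAlgebra.single (vv p) r) := by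
    intro p r
    simp [ψ]
  have l : ψ.comp φ.toAddMonoidHom = AddMonoidHom.id _ := by
    refine Finsupp.addHom_ext' fun b => AddMonoidAlgebra.addMonoidHom_ext fun v r => ?_
    simp [hφ, hψ, h2, h3]
  have r : φ.toAddMonoidHom.comp ψ = AddMonoidHom.id _ := by
    refine AddMonoidAlgebra.addMonoidHom_ext fun v r => ?_
    simp [hφ, hψ, h1]
  let e : (B →₀ AddMonoidAlgebra F N) ≃ₗ[AddMonoidAlgebra F N] AddMonoidAlgebra F P :=
    LinearEquiv.ofBijective φ ⟨Function.LeftInverse.injective (g := ψ) (DFunLike.congr_fun l),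
      Function.RightInverse.surjective (g := ψ) (DFunLike.congr_fun r)⟩
  exact ⟨Module.Finite.equiv e, Module.Flat.of_linearEquiv e.symm⟩

/-- Let `F` be a field, `n, d ≥ 1`, and `L` an additive subgroup of `ℚⁿ` with
`ℤⁿ ⊆ L ⊆ (1/d)·ℤⁿ`. Set `M = L ∩ (ℚ≥0)ⁿ`. Then the monoid algebra `F[M]` is a finitely
generated and flat module over `F[ℕⁿ]`, via the ring homomorphism induced by the
inclusion of monoids `ℕⁿ ⊆ M`. -/
theorem monoidAlgebra_finite_flat_over_polynomials
    (F : Type*) [Field F] (n d : ℕ) (hn : 1 ≤ n) (hd : 1 ≤ d)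
    (L : AddSubgroup (Fin n → ℚ))
    (hZL : ∀ v : Fin n → ℤ, (fun i => (v i : ℚ)) ∈ L)
    (hLd : ∀ x ∈ L, ∀ i : Fin n, ∃ m : ℤ, x i = (m : ℚ) / (d : ℚ))
    (M : AddSubmonoid (Fin n → ℚ))
    (hM : ∀ x : Fin n → ℚ, x ∈ M ↔ x ∈ L ∧ ∀ i, 0 ≤ x i)
    (ι : (Fin n → ℕ) →+ M)
    (hι : ∀ v : Fin n → ℕ, ((ι v : M) : Fin n → ℚ) = fun i => (v i : ℚ)) :
    @Module.Finite (AddMonoidAlgebra F (Fin n → ℕ)) (AddMonoidAlgebra F M) _ _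
      (AddMonoidAlgebra.mapDomainRingHom F ι).toModule ∧
    @Module.Flat (AddMonoidAlgebra F (Fin n → ℕ)) (AddMonoidAlgebra F M) _ _
      (AddMonoidAlgebra.mapDomainRingHom F ι).toModule := by
  classical
  have hd0 : (0 : ℚ) < d := by exact_mod_cast hd
  let B := {b : M // ∀ i, (b : Fin n → ℚ) i < 1}
  have hfin : Finite B := by
    have hk : ∀ b : B, ∀ i, ∃ k : Fin d, (b.1 : Fin n → ℚ) i = (k : ℕ) / (d : ℚ) := by
      intro b i
      obtain ⟨hL, h0⟩ := (hM _).1 b.1.2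
      obtain ⟨m, hm⟩ := hLd _ hL i
      have h0 := h0 i
      have h1 := b.2 i
      rw [hm] at h0 h1
      rw [div_lt_one hd0] at h1
      have h0' : (0 : ℚ) ≤ m := by
        by_contra h
        exact absurd h0 (not_le.2 (div_neg_of_neg_of_pos (not_le.1 h) hd0))
      have h0'' : 0 ≤ m := by exact_mod_cast h0'
      lift m to ℕ using h0''
      have h1' : m < d := by exact_mod_cast h1
      exact ⟨⟨m, h1'⟩, by simpa using hm⟩
    choose k hk using hk
    refine Finite.of_injective k fun a b hab => ?_
    apply Subtype.ext; apply Subtype.ext; funext i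
    rw [hk, hk, hab]
  let vv : M → (Fin n → ℕ) := fun x i => ⌊(x : Fin n → ℚ) i⌋₊
  have hx0 : ∀ (x : M) i, 0 ≤ (x : Fin n → ℚ) i := fun x => ((hM _).1 x.2).2
  have hmem : ∀ x : M, (x : Fin n → ℚ) - (fun i => ((vv x i : ℕ) : ℚ)) ∈ M := by
    intro x
    refine (hM _).2 ⟨L.sub_mem ((hM _).1 x.2).1 ?_, fun i => ?_⟩
    · simpa using hZL (fun i => (vv x i : ℤ))
    · exact sub_nonneg.2 (Nat.floor_le (hx0 x i))
  let bb : M → B := fun x => ⟨⟨_, hmem x⟩, fun i => by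
    have := Nat.lt_floor_add_one ((x : Fin n → ℚ) i)
    simp only [Pi.sub_apply, vv]
    linarith⟩
  have h1 : ∀ x, ι (vv x) + (bb x).1 = x := by
    intro x
    apply Subtype.ext
    simp [hι, bb]
  have h3 : ∀ (b : B) v, vv (ι v + b.1) = v := by
    intro b v
    funext i
    simp only [vv, AddSubmonoid.coe_add, hι, Pi.add_apply]
    rw [Nat.floor_eq_iff (add_nonneg (Nat.cast_nonneg _) (hx0 b.1 i))]
    have := b.2 i
    have := hx0 b.1 i
    constructor <;> linarith
  refine aux_free F ι (fun b : B => b.1) bb vv h1 (fun b v => ?_) h3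
  apply Subtype.ext; apply Subtype.ext
  simp only [bb, h3, AddSubmonoid.coe_add, hι]
  simp
end

section
/- Let F be a field, n ≥ 1 and d ≥ 1 integers, and let L be an additive subgroup of ℚⁿ with ℤⁿ ⊆ L ⊆ (1/d)·ℤⁿ. Set M = L ∩ (ℚ≥0)ⁿ, an additive submonoid of ℚⁿ. Then the monoid algebra F[M] is an integral domain which is integrally closed in its field of fractions (i.e. F[M] is a normal domain). -/
theorem aux_isIntegrallyClosed {A B : Type*} [CommRing A] [CommRing B] [IsDomain A] [IsDomain B]
    [IsIntegrallyClosed B] (f : A →+* B) (hf : Function.Injective f)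
    (h : ∀ a b : A, f b ∣ f a → b ∣ a) : IsIntegrallyClosed A := by
  rw [isIntegrallyClosed_iff (FractionRing A)]
  intro x hx
  obtain ⟨a, b, hb, rfl⟩ := IsFractionRing.div_surjective (A := A) x
  have hb0 : b ≠ 0 := nonZeroDivisors.ne_zero hb
  let g : FractionRing A →+* FractionRing B :=
    IsFractionRing.map (A := A) (B := B) (j := f) hf
  have hg : ∀ a : A, g (algebraMap A _ a) = algebraMap B _ (f a) := fun a => by
    simp [g, IsFractionRing.map]
  have hint : IsIntegral B (g (algebraMap A _ a / algebraMap A _ b)) := by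
    obtain ⟨p, hp, hp0⟩ := hx
    refine ⟨p.map f, hp.map f, ?_⟩
    have : (algebraMap B (FractionRing B)).comp f = g.comp (algebraMap A (FractionRing A)) := by
      ext a; simp [hg]
    rw [Polynomial.eval₂_map, this, ← Polynomial.hom_eval₂, hp0, map_zero]
  obtain ⟨y, hy⟩ := IsIntegrallyClosed.isIntegral_iff.mp hint
  have hfb : algebraMap B (FractionRing B) (f b) ≠ 0 := by
    simpa [map_eq_zero_iff f hf] using hb0
  rw [map_div₀, hg, hg, eq_div_iff hfb, ← map_mul] at hy
  have hy' := IsFractionRing.injective B (FractionRing B) hy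
  obtain ⟨c, rfl⟩ := h a b ⟨y, by rw [← hy', mul_comm]⟩
  refine ⟨c, ?_⟩
  have hb' : algebraMap A (FractionRing A) b ≠ 0 := by simpa using hb0
  rw [eq_div_iff hb', ← map_mul, mul_comm]

theorem aux_retract {F M N : Type*} [Field F] [AddCommMonoid M] [AddCommMonoid N]
    [IsLeftCancelAdd N]
    (e : M →+ N) (he : Function.Injective e)
    (hs : ∀ m m' q, e m + q = e m' → ∃ k, e k = q)
    (b : AddMonoidAlgebra F M) (p : AddMonoidAlgebra F N) :
    AddMonoidAlgebra.comapDomain e he (AddMonoidAlgebra.mapDomainRingHom F e b * p) =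
      b * AddMonoidAlgebra.comapDomain e he p := by
  induction b using AddMonoidAlgebra.induction_linear with
  | zero => simp
  | add x y hx hy => simp only [map_add, add_mul, AddMonoidAlgebra.comapDomain_add, hx, hy]
  | single m r =>
    induction p using AddMonoidAlgebra.induction_linear with
    | zero => simp
    | add x y hx hy => simp only [mul_add, AddMonoidAlgebra.comapDomain_add, hx, hy]
    | single q s =>
      have h1 : AddMonoidAlgebra.mapDomainRingHom F e (AddMonoidAlgebra.single m r) =
        AddMonoidAlgebra.single (e m) r := by simp
      rw [h1, AddMonoidAlgebra.single_mul_single]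
      by_cases hq : q ∈ Set.range e
      · obtain ⟨k, rfl⟩ := hq
        rw [← map_add, AddMonoidAlgebra.comapDomain_single_map,
          AddMonoidAlgebra.comapDomain_single_map, AddMonoidAlgebra.single_mul_single]
      · have hz : ∀ (u : N) (t : F), u ∉ Set.range e →
            AddMonoidAlgebra.comapDomain e he (AddMonoidAlgebra.single u t) = 0 := by
          intro u t hu
          ext k
          have hk : u ≠ e k := fun h => hu ⟨k, h.symm⟩
          simp [hk]
        rw [hz q s hq, hz, mul_zero]
        rintro ⟨m', hm'⟩
        exact hq (hs m m' q hm'.symm)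

/-- Let `F` be a field, `n, d ≥ 1`, and `L` an additive subgroup of `ℚⁿ` with
`ℤⁿ ⊆ L ⊆ (1/d)·ℤⁿ`. Set `M = L ∩ (ℚ≥0)ⁿ`. Then the monoid algebra `F[M]` is an
integral domain which is integrally closed in its field of fractions. -/
theorem monoidAlgebra_isDomain_isIntegrallyClosed
    (F : Type*) [Field F] (n d : ℕ) (hn : 1 ≤ n) (hd : 1 ≤ d)
    (L : AddSubgroup (Fin n → ℚ))
    (hZL : ∀ v : Fin n → ℤ, (fun i => (v i : ℚ)) ∈ L)
    (hLd : ∀ x ∈ L, ∀ i : Fin n, ∃ m : ℤ, x i = (m : ℚ) / (d : ℚ))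
    (M : AddSubmonoid (Fin n → ℚ))
    (hM : ∀ x : Fin n → ℚ, x ∈ M ↔ x ∈ L ∧ ∀ i, 0 ≤ x i) :
    IsDomain (AddMonoidAlgebra F M) ∧ IsIntegrallyClosed (AddMonoidAlgebra F M) := by
  have hd0 : (0 : ℚ) < d := by exact_mod_cast hd
  have hex : ∀ (x : M) (i : Fin n), ∃ k : ℕ, (k : ℚ) = x.1 i * d := by
    intro x i
    obtain ⟨hxL, hx0⟩ := (hM x.1).1 x.2
    obtain ⟨m, hm⟩ := hLd _ hxL i
    have h1 : x.1 i * d = m := by rw [hm]; field_simp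
    have h2 : (0 : ℚ) ≤ m := by rw [← h1]; exact mul_nonneg (hx0 i) hd0.le
    have h3 : 0 ≤ m := by exact_mod_cast h2
    obtain ⟨k, rfl⟩ := Int.eq_ofNat_of_zero_le h3
    exact ⟨k, by rw [h1]; simp⟩
  choose c hc using hex
  let e : M →+ (Fin n →₀ ℕ) :=
    { toFun := fun x => Finsupp.equivFunOnFinite.symm (c x)
      map_zero' := by
        ext i
        have := hc 0 i
        simpa using this
      map_add' := by
        intro x y
        ext i
        have h : (c (x + y) i : ℚ) = c x i + c y i := by
          rw [hc, hc, hc]; simp [add_mul]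
        simpa using (by exact_mod_cast h : c (x + y) i = c x i + c y i) }
  have hec : ∀ x i, e x i = c x i := fun x i => rfl
  have he : Function.Injective e := by
    intro x y hxy
    ext i
    have h : c x i = c y i := by rw [← hec, ← hec, hxy]
    have h2 : x.1 i * d = y.1 i * d := by rw [← hc, ← hc, h]
    exact mul_right_cancel₀ hd0.ne' h2
  have hs : ∀ m m' q, e m + q = e m' → ∃ k, e k = q := by
    intro m m' q h
    have hi : ∀ i, (m'.1 i - m.1 i) * d = q i := by
      intro i
      have h1 : c m i + q i = c m' i := by rw [← hec, ← hec, ← h]; rfl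
      have h2 : (c m i : ℚ) + q i = c m' i := by exact_mod_cast h1
      rw [hc, hc] at h2
      linarith
    have hmem : m'.1 - m.1 ∈ M := by
      rw [hM]
      refine ⟨L.sub_mem ((hM _).1 m'.2).1 ((hM _).1 m.2).1, fun i => ?_⟩
      have : 0 ≤ (m'.1 i - m.1 i) * d := by rw [hi]; positivity
      exact nonneg_of_mul_nonneg_left this hd0
    refine ⟨⟨_, hmem⟩, ?_⟩
    ext i
    rw [hec]
    have := hc ⟨_, hmem⟩ i
    have h3 := hi i
    simp only [Pi.sub_apply] at this
    rw [h3] at this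
    exact_mod_cast this
  let f : AddMonoidAlgebra F M →+* MvPolynomial (Fin n) F := AddMonoidAlgebra.mapDomainRingHom F e
  have hf : Function.Injective f := AddMonoidAlgebra.mapDomain_injective he
  have hdom : IsDomain (AddMonoidAlgebra F M) := hf.isDomain f
  refine ⟨hdom, aux_isIntegrallyClosed f hf ?_⟩
  rintro a b ⟨p, hp⟩
  have h1 := aux_retract e he hs a 1
  have h2 := aux_retract e he hs b p
  have h3 : AddMonoidAlgebra.comapDomain e he (1 : AddMonoidAlgebra F (Fin n →₀ ℕ)) = 1 := by
    rw [AddMonoidAlgebra.one_def, ← map_zero e, AddMonoidAlgebra.comapDomain_single_map,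
      AddMonoidAlgebra.one_def]
  rw [h3, mul_one, mul_one] at h1
  refine ⟨AddMonoidAlgebra.comapDomain e he p, ?_⟩
  rw [← h2, ← h1]
  exact congrArg (AddMonoidAlgebra.comapDomain e he) hp
end

section
/- Let F be a field, n ≥ 1 and d ≥ 1 integers, and let L be an additive subgroup of ℚⁿ with ℤⁿ ⊆ L ⊆ (1/d)·ℤⁿ. Set M = L ∩ (ℚ≥0)ⁿ. Inside the monoid (group) algebra F[L], let F[ℕⁿ] denote the F-subalgebra spanned by the monomials x^s with s ∈ ℕⁿ, and let F[M] denote the F-subalgebra spanned by the monomials x^s with s ∈ M. Then F[M] equals the integral closure of F[ℕⁿ] in F[L]. -/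
section Helpers
open AddMonoidAlgebra

/-- Supports on which `h` is bounded below by `r`. -/
def SuppGe {F A : Type*} [Field F] (h : A → ℚ) (r : ℚ) (f : AddMonoidAlgebra F A) : Prop :=
  ∀ a, f.coeff a ≠ 0 → r ≤ h a

theorem SuppGe.add {F A : Type*} [Field F] {h : A → ℚ} {r : ℚ} {f g : AddMonoidAlgebra F A}
    (hf : SuppGe h r f) (hg : SuppGe h r g) : SuppGe h r (f + g) := by
  intro a ha
  by_contra hr
  have h1 : f.coeff a = 0 := by
    by_contra h1
    exact hr (hf a h1)
  have h2 : g.coeff a = 0 := by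
    by_contra h2
    exact hr (hg a h2)
  simp [h1, h2] at ha

theorem SuppGe.mul {F A : Type*} [Field F] [AddCommGroup A] {h : A →+ ℚ} {r t : ℚ}
    {f g : AddMonoidAlgebra F A}
    (hf : SuppGe h r f) (hg : SuppGe h t g) : SuppGe h (r + t) (f * g) := by
  classical
  intro a ha
  have := support_coeff_mul_subset f g (Finsupp.mem_support_iff.2 ha)
  obtain ⟨b, hb, c, hc, rfl⟩ := Finset.mem_add.1 this
  rw [map_add]
  exact add_le_add (hf b (Finsupp.mem_support_iff.1 hb)) (hg c (Finsupp.mem_support_iff.1 hc))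

theorem SuppGe.single {F A : Type*} [Field F] {h : A → ℚ} {r : ℚ} {a : A} (c : F)
    (ha : r ≤ h a) : SuppGe h r (AddMonoidAlgebra.single a c) := by
  classical
  intro b hb
  rw [coeff_single, Finsupp.single_apply] at hb
  split_ifs at hb with hab
  · exact hab ▸ ha
  · exact absurd rfl hb

theorem SuppGe.one {F A : Type*} [Field F] [AddCommGroup A] {h : A →+ ℚ} :
    SuppGe h 0 (1 : AddMonoidAlgebra F A) := by
  rw [one_def]
  exact SuppGe.single _ (by simp)

theorem SuppGe.pow {F A : Type*} [Field F] [AddCommGroup A] {h : A →+ ℚ} {r : ℚ}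
    {f : AddMonoidAlgebra F A} (hf : SuppGe h r f) (k : ℕ) : SuppGe h (k * r) (f ^ k) := by
  induction k with
  | zero => simpa using SuppGe.one
  | succ k ih =>
    have := ih.mul hf
    rw [pow_succ]
    convert this using 1
    push_cast
    ring

/-- `a` is the least element of the support with respect to `D`. -/
def IsLow {F A Γ : Type*} [Field F] [LinearOrder Γ] (D : A → Γ) (a : A)
    (f : AddMonoidAlgebra F A) : Prop :=
  f.coeff a ≠ 0 ∧ ∀ b, f.coeff b ≠ 0 → D a ≤ D b

theorem IsLow.mul {F A Γ : Type*} [Field F] [AddCommGroup A] [AddCommGroup Γ] [LinearOrder Γ]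
    [IsOrderedAddMonoid Γ] {D : A →+ Γ} (hD : Function.Injective D) {a b : A}
    {f g : AddMonoidAlgebra F A} (hf : IsLow D a f) (hg : IsLow D b g) :
    IsLow D (a + b) (f * g) := by
  classical
  constructor
  · rw [coeff_mul_add_of_uniqueAdd]
    · exact mul_ne_zero hf.1 hg.1
    · intro a' b' ha' hb' he
      have h1 := hf.2 a' (Finsupp.mem_support_iff.1 ha')
      have h2 := hg.2 b' (Finsupp.mem_support_iff.1 hb')
      have h3 : D a' + D b' = D a + D b := by rw [← map_add, he, map_add]
      have h4 := (add_eq_add_iff_eq_and_eq h1 h2).1 h3.symm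
      exact ⟨hD h4.1.symm, hD h4.2.symm⟩
  · intro c hc
    have := support_coeff_mul_subset f g (Finsupp.mem_support_iff.2 hc)
    obtain ⟨b, hb, e, he, rfl⟩ := Finset.mem_add.1 this
    rw [map_add, map_add]
    exact add_le_add (hf.2 _ (Finsupp.mem_support_iff.1 hb)) (hg.2 _ (Finsupp.mem_support_iff.1 he))

theorem IsLow.pow {F A Γ : Type*} [Field F] [AddCommGroup A] [AddCommGroup Γ] [LinearOrder Γ]
    [IsOrderedAddMonoid Γ] {D : A →+ Γ} (hD : Function.Injective D) {a : A}
    {f : AddMonoidAlgebra F A} (hf : IsLow D a f) (k : ℕ) :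
    IsLow D (k • a) (f ^ k) := by
  classical
  induction k with
  | zero =>
    rw [pow_zero, one_def, zero_smul]
    refine ⟨by simp, fun b hb => ?_⟩
    rw [coeff_single, Finsupp.single_apply] at hb
    split_ifs at hb with hab
    · rw [hab]
    · exact absurd rfl hb
  | succ k ih =>
    rw [pow_succ, succ_nsmul]
    exact ih.mul hD hf

/-- The refined order: `h` first, then lexicographic. -/
def lexHom {n : ℕ} (L : AddSubgroup (Fin n → ℚ)) (h : L →+ ℚ) :
    L →+ Lex (ℚ × Lex (Fin n → ℚ)) where
  toFun s := toLex (h s, toLex (s : Fin n → ℚ))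
  map_zero' := by simp
  map_add' a b := by simp; rfl

theorem lexHom_injective {n : ℕ} (L : AddSubgroup (Fin n → ℚ)) (h : L →+ ℚ) :
    Function.Injective (lexHom L h) := by
  intro a b hab
  have h1 : (h a, toLex (a : Fin n → ℚ)) = (h b, toLex (b : Fin n → ℚ)) := toLex.injective hab
  exact Subtype.ext (toLex.injective (Prod.ext_iff.1 h1).2)

theorem lexHom_le {n : ℕ} (L : AddSubgroup (Fin n → ℚ)) (h : L →+ ℚ) {a b : L}
    (hab : lexHom L h a ≤ lexHom L h b) : h a ≤ h b := by
  rcases Prod.Lex.toLex_le_toLex.1 hab with h1 | h1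
  · exact h1.le
  · exact h1.1.le

theorem suppGe_of_integral {F : Type*} [Field F] {n : ℕ} (L : AddSubgroup (Fin n → ℚ))
    (h : L →+ ℚ) (B : Subalgebra F (AddMonoidAlgebra F L)) (hB : ∀ b ∈ B, SuppGe h 0 b)
    (x : AddMonoidAlgebra F L) (hx : IsIntegral B x) : SuppGe h 0 x := by
  intro a ha
  by_contra hneg
  push Not at hneg
  obtain ⟨s, hs, hmin⟩ := Finset.exists_min_image x.coeff.support (lexHom L h)
    ⟨a, Finsupp.mem_support_iff.2 ha⟩
  have hlow : IsLow (lexHom L h) s x :=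
    ⟨Finsupp.mem_support_iff.1 hs, fun b hb => hmin b (Finsupp.mem_support_iff.2 hb)⟩
  have hge : SuppGe h (h s) x := fun b hb => lexHom_le L h (hlow.2 b hb)
  have hsneg : h s < 0 := (hge a ha).trans_lt hneg
  obtain ⟨p, hp, hpx⟩ := hx
  rw [Polynomial.eval₂_eq_sum_range, Finset.sum_range_succ, hp.coeff_natDegree, map_one,
    one_mul] at hpx
  have h1 := congrArg (fun f => f.coeff (p.natDegree • s)) hpx
  simp only [coeff_add, Finsupp.add_apply, coeff_sum, Finsupp.finsetSum_apply, coeff_zero,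
    Finsupp.zero_apply] at h1
  rw [Finset.sum_eq_zero, zero_add] at h1
  · exact (hlow.pow (lexHom_injective L h) p.natDegree).1 h1
  · intro j hj
    by_contra hne
    have h2 := ((hB _ (p.coeff j).2).mul (hge.pow j)) _ hne
    rw [map_nsmul, zero_add, nsmul_eq_mul] at h2
    have h3 : (j : ℚ) < p.natDegree := by exact_mod_cast Finset.mem_range.1 hj
    nlinarith

theorem isIntegral_of_mem_subalgebra {F R : Type*} [Field F] [CommRing R] [Algebra F R]
    (B : Subalgebra F R) {y : R} (hy : y ∈ B) : IsIntegral B y :=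
  isIntegral_algebraMap (R := B) (x := ⟨y, hy⟩)

end Helpers

/-- Let `F` be a field, `n, d ≥ 1`, and `L` an additive subgroup of `ℚⁿ` with
`ℤⁿ ⊆ L ⊆ (1/d)·ℤⁿ`; set `M = L ∩ (ℚ≥0)ⁿ`. Inside the group algebra `F[L]`, the
`F`-subalgebra `F[M]` spanned by the monomials `x^s` with `s ∈ M` equals the integral
closure of the `F`-subalgebra `F[ℕⁿ]` spanned by the monomials `x^s`, `s ∈ ℕⁿ`. -/
theorem monoidAlgebra_eq_integralClosure
    (F : Type*) [Field F] (n d : ℕ) (hn : 1 ≤ n) (hd : 1 ≤ d)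
    (L : AddSubgroup (Fin n → ℚ))
    (hZL : ∀ v : Fin n → ℤ, (fun i => (v i : ℚ)) ∈ L)
    (hLd : ∀ x ∈ L, ∀ i : Fin n, ∃ m : ℤ, x i = (m : ℚ) / (d : ℚ)) :
    ∀ x : AddMonoidAlgebra F L,
      x ∈ Algebra.adjoin F {y : AddMonoidAlgebra F L |
            ∃ s : L, (∀ i, 0 ≤ (s : Fin n → ℚ) i) ∧ y = AddMonoidAlgebra.of' F L s} ↔
      x ∈ integralClosure
            (Algebra.adjoin F {y : AddMonoidAlgebra F L |
              ∃ s : L, (∀ i, ∃ m : ℕ, (s : Fin n → ℚ) i = (m : ℚ)) ∧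
                y = AddMonoidAlgebra.of' F L s})
            (AddMonoidAlgebra F L) := by
  intro x
  constructor
  · intro hx
    rw [mem_integralClosure_iff]
    induction hx using Algebra.adjoin_induction with
    | mem y hy =>
      obtain ⟨s, hs, rfl⟩ := hy
      refine IsIntegral.of_pow (n := d) hd ?_
      have hpow : (AddMonoidAlgebra.of' F L s) ^ d = AddMonoidAlgebra.of' F L (d • s) := by
        simp [AddMonoidAlgebra.of', AddMonoidAlgebra.single_pow]
      rw [hpow]
      refine isIntegral_of_mem_subalgebra _ (Algebra.subset_adjoin ?_)
      refine ⟨d • s, fun i => ?_, rfl⟩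
      obtain ⟨m, hm⟩ := hLd s s.2 i
      have hd' : (0 : ℚ) < d := by exact_mod_cast hd
      have hm0 : 0 ≤ m := by
        have := hs i
        rw [hm, le_div_iff₀ hd', zero_mul] at this
        exact_mod_cast this
      refine ⟨m.toNat, ?_⟩
      have h1 : ((m.toNat : ℤ) : ℚ) = m := by rw [Int.toNat_of_nonneg hm0]
      have h2 : ((d • s : L) : Fin n → ℚ) i = d * (s : Fin n → ℚ) i := by simp
      rw [h2, hm, mul_div_cancel₀ _ hd'.ne', ← h1, Int.cast_natCast]
    | algebraMap r =>
      exact isIntegral_of_mem_subalgebra _ (Subalgebra.algebraMap_mem _ r)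
    | add a b _ _ ha hb => exact ha.add hb
    | mul a b _ _ ha hb => exact ha.mul hb
  · intro hx
    rw [mem_integralClosure_iff] at hx
    have key : ∀ s : L, x.coeff s ≠ 0 → ∀ i, 0 ≤ (s : Fin n → ℚ) i := by
      intro s hs i
      refine suppGe_of_integral L ((Pi.evalAddMonoidHom (fun _ : Fin n => ℚ) i).comp L.subtype)
        _ ?_ x hx s hs
      intro b hb
      induction hb using Algebra.adjoin_induction with
      | mem y hy =>
        obtain ⟨s, hs, rfl⟩ := hy
        refine SuppGe.single _ ?_
        obtain ⟨m, hm⟩ := hs i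
        simp [hm]
      | algebraMap r =>
        rw [AddMonoidAlgebra.coe_algebraMap]
        exact SuppGe.single _ (by simp)
      | add a b _ _ ha hb => exact ha.add hb
      | mul a b _ _ ha hb => simpa using ha.mul hb
    have hsum : x = ∑ s ∈ x.coeff.support, x.coeff s • AddMonoidAlgebra.of' F L s := by
      conv_lhs => rw [← AddMonoidAlgebra.sum_coeff_single x]
      simp [Finsupp.sum, AddMonoidAlgebra.of']
    rw [hsum]
    refine Subalgebra.sum_mem _ fun s hs => Subalgebra.smul_mem _ (Algebra.subset_adjoin ?_) _
    exact ⟨s, key s (Finsupp.mem_support_iff.1 hs), rfl⟩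
end
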